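/- Let f : 𝒳 × [m] → Δ_k be a deterministic calibrated predictor on a classification problem μ, let r_a = f♯(μ^X_a × {a}) and suppose each r_a is finitely supported on 𝓡_a ⊂ Δ_k. Let S_a be n i.i.d. samples from r_a (for each a ∈ [m], independent across groups and independent of f), let r̂_a be the empirical distribution of S_a, let q̂ ∈ 𝒬_k be a barycenter achieving min_{q∈𝒬_k} Σ_a W₁(r̂_a, q), and let T_a : Δ_k → 𝒴 be any randomized map that agrees on supp(r̂_a) with an optimal transport from r̂_a to q̂ under the ℓ₁ cost. Define the derived classifier ĥ(x,a) = T_a ∘ f(x,a), and Err*_f = (1/2) min_{q∈𝒬_k} Σ_a W₁(r_a, q). Then for any δ ∈ (0,1), with probability at least 1 − δ over the samples, Σ_{a∈[m]} Err_a(ĥ) − Err*_f ≤ Σ_{a∈[m]} √( (2|𝓡_a|²/n) · ln(2m|𝓡_a|/δ) ), and DP Gap(ĥ) ≤ max_{a∈[m]} √( (|𝓡_a|²/(2n)) · ln(2m|𝓡_a|/δ) ). -/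

import Mathlib

/-!
Write `r a` for the law of the predictor in group `a` and `r̂ a` for its empirical version.
Everything reduces to the `ℓ₁` distance `d a` between the mass functions of `r̂ a` and `r a`.

* *Concentration* (`prob_empDist_close`). Hoeffding's inequality for the frequency of each atom
  and a union bound over groups and atoms give, with probability at least `1 - δ`, a deviation
  of at most `√(ln (2 m |Ra a| / δ) / (2 n))` at every atom, hence
  `d a ≤ ε a := |Ra a| √(ln (2 m |Ra a| / δ) / (2 n))` for all `a`.
* *Error*. On the simplex `‖s - e_y‖₁ = 2 (1 - s_y)`, so by calibration the error of a randomized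
  map is half its transport cost under `r a` (`lintegral_error_eq`). As the cost is at most `2`,
  replacing `r a` by `r̂ a` changes half the cost by at most `d a`; the maps are optimal for the
  empirical barycenter problem; and `W1 (r̂ a) q ≤ W1 (r a) q + 2 d a` for every competitor `q`
  (`W1_le_add_l1Dist`). The excess error is thus at most `∑ 2 ε a`
  (`sum_cost_le_barycenter_add`), which is the stated bound.
* *Demographic parity* (`dp_gap_le`). The maps push every `r̂ a` to the same `q̂`, and a
  randomized map does not increase `ℓ₁` distance, so every output law is within `ε a` of `q̂`.
-/

open MeasureTheory ProbabilityTheory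
open scoped ENNReal NNReal BigOperators

noncomputable section

/-- The one-hot vector `e_i ∈ ℝ^k`. -/
def oneHot (k : ℕ) (i : Fin k) : Fin k → ℝ := fun j => if j = i then 1 else 0

/-- ℓ₁ transportation cost between a point of ℝ^k and a vertex `e_y`. -/
def l1Cost (k : ℕ) (s : Fin k → ℝ) (y : Fin k) : ℝ≥0∞ :=
  ENNReal.ofReal (∑ j, |s j - oneHot k y j|)

/-- `γ` is a coupling of `p` and `q`. -/
def IsCoupling {α β : Type*} [MeasurableSpace α] [MeasurableSpace β]
    (γ : Measure (α × β)) (p : Measure α) (q : Measure β) : Prop :=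
  γ.fst = p ∧ γ.snd = q

/-- Wasserstein-1 cost (under the ℓ₁ norm) between a distribution on the simplex
and a distribution on the vertices (encoded by `Fin k`). -/
def W1 (k : ℕ) (p : Measure (Fin k → ℝ)) (q : Measure (Fin k)) : ℝ≥0∞ :=
  ⨅ (γ : Measure ((Fin k → ℝ) × Fin k)) (_ : IsCoupling γ p q),
    ∫⁻ z, l1Cost k z.1 z.2 ∂γ

/-- `f` is the Bayes regressor of the one-hot labels for `μ`, a joint distribution on
`𝒳 × 𝒴` with labels encoded by `Fin k`: it takes values in the simplex `Δ_k` and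
`f x i` is the conditional probability of class `i` given `X = x`. -/
def IsBayesRegressor {𝒳 : Type*} [MeasurableSpace 𝒳] (k : ℕ)
    (μ : Measure (𝒳 × Fin k)) (f : 𝒳 → Fin k → ℝ) : Prop :=
  Measurable f ∧ (∀ x, (∀ i, 0 ≤ f x i) ∧ ∑ i, f x i = 1) ∧
    ∀ (S : Set 𝒳), MeasurableSet S → ∀ i : Fin k,
      μ (S ×ˢ ({i} : Set (Fin k))) = ∫⁻ x in S, ENNReal.ofReal (f x i) ∂μ.fst

/-- Coupling induced by a randomized transport `T` applied to source `p`. -/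
def inducedCoupling {k : ℕ} (p : Measure (Fin k → ℝ)) (T : Kernel (Fin k → ℝ) (Fin k)) :
    Measure ((Fin k → ℝ) × Fin k) :=
  p.bind (fun s => (T s).map (fun y => (s, y)))

/-- A deterministic predictor `f : 𝒳 × [m] → Δ_k` is calibrated:
`P(Y = e_i ∣ f(X,A) = s, A = a) = s_i` for all `s`, `i`, `a`. -/
def IsCalibrated {𝒳 : Type*} [MeasurableSpace 𝒳] (k m : ℕ)
    (μ : Fin m → Measure (𝒳 × Fin k)) (f : 𝒳 × Fin m → Fin k → ℝ) : Prop :=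
  ∀ (a : Fin m) (i : Fin k) (s : Fin k → ℝ),
    (μ a) {p | f (p.1, a) = s ∧ p.2 = i} =
      ENNReal.ofReal (s i) * (μ a) {p | f (p.1, a) = s}

/-- Empirical distribution of the `n` group-`a` samples recorded in `ω`. -/
def empDist {k m n : ℕ} (ω : Fin m → Fin n → (Fin k → ℝ)) (a : Fin m) :
    Measure (Fin k → ℝ) :=
  (n : ℝ≥0∞)⁻¹ • ∑ i : Fin n, Measure.dirac (ω a i)

/-! ### Measures supported on a finite set -/

section FiniteSupport

variable {α : Type*} [MeasurableSpace α]

lemma lintegral_eq_sum_of_finset [MeasurableSingletonClass α] {p : Measure α} {S : Finset α}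
    (hp : p ((S : Set α)ᶜ) = 0) (c : α → ℝ≥0∞) :
    ∫⁻ x, c x ∂p = ∑ s ∈ S, c s * p {s} := by
  have h : p.restrict (S : Set α) = p :=
    Measure.restrict_eq_self_of_ae_mem (ae_iff.2 hp)
  conv_lhs => rw [← h]
  exact lintegral_finset S c

/-- The `ℓ₁` distance between the mass functions of `p` and `p'` on the finite set `S`. -/
def l1Dist (S : Finset α) (p p' : Measure α) : ℝ :=
  ∑ s ∈ S, |p.real {s} - p'.real {s}|

lemma l1Dist_comm (S : Finset α) (p p' : Measure α) : l1Dist S p p' = l1Dist S p' p := by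
  simp only [l1Dist, abs_sub_comm]

lemma measure_singleton_le_add (p p' : Measure α) [IsFiniteMeasure p] [IsFiniteMeasure p']
    (s : α) :
    p {s} ≤ p' {s} + ENNReal.ofReal |p.real {s} - p'.real {s}| := by
  rw [← ofReal_measureReal (μ := p) (s := {s}), ← ofReal_measureReal (μ := p') (s := {s}),
    ← ENNReal.ofReal_add (by positivity) (by positivity)]
  exact ENNReal.ofReal_le_ofReal (by linarith [le_abs_self (p.real {s} - p'.real {s})])

lemma lintegral_le_add_l1Dist [MeasurableSingletonClass α] {p p' : Measure α}
    [IsFiniteMeasure p] [IsFiniteMeasure p']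
    {S : Finset α} (hp : p ((S : Set α)ᶜ) = 0) (hp' : p' ((S : Set α)ᶜ) = 0)
    {c : α → ℝ≥0∞} (hc : ∀ s ∈ S, c s ≤ 2) :
    ∫⁻ x, c x ∂p ≤ ∫⁻ x, c x ∂p' + 2 * ENNReal.ofReal (l1Dist S p p') := by
  rw [lintegral_eq_sum_of_finset hp, lintegral_eq_sum_of_finset hp', l1Dist,
    ENNReal.ofReal_sum_of_nonneg (fun _ _ => abs_nonneg _), Finset.mul_sum,
    ← Finset.sum_add_distrib]
  refine Finset.sum_le_sum fun s hs => ?_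
  calc c s * p {s} ≤ c s * (p' {s} + ENNReal.ofReal |p.real {s} - p'.real {s}|) := by
        gcongr; exact measure_singleton_le_add p p' s
    _ = c s * p' {s} + c s * ENNReal.ofReal |p.real {s} - p'.real {s}| := mul_add _ _ _
    _ ≤ _ := by gcongr; exact hc s hs

/-- Pushing two measures through the same randomized map does not increase their `ℓ₁` distance. -/
lemma sum_abs_bind_sub_le [MeasurableSingletonClass α] {k : ℕ} {p p' : Measure α}
    [IsFiniteMeasure p] [IsFiniteMeasure p']
    {S : Finset α} (hp : p ((S : Set α)ᶜ) = 0) (hp' : p' ((S : Set α)ᶜ) = 0)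
    (T : Kernel α (Fin k)) [IsMarkovKernel T] :
    ∑ y, |((p.bind T) {y}).toReal - ((p'.bind T) {y}).toReal| ≤ l1Dist S p p' := by
  have key : ∀ (r : Measure α) [IsFiniteMeasure r], r ((S : Set α)ᶜ) = 0 → ∀ y,
      ((r.bind T) {y}).toReal = ∑ s ∈ S, (T s).real {y} * r.real {s} := by
    intro r _ hr y
    rw [Measure.bind_apply (measurableSet_singleton y) T.aemeasurable,
      lintegral_eq_sum_of_finset hr, ENNReal.toReal_sum]
    · simp [Measure.real]
    · intro s _
      exact ENNReal.mul_ne_top (measure_ne_top _ _) (measure_ne_top _ _)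
  have hsum : ∀ s, ∑ y, (T s).real {y} = 1 := by
    intro s
    simp
  calc ∑ y, |((p.bind T) {y}).toReal - ((p'.bind T) {y}).toReal|
      = ∑ y, |∑ s ∈ S, (T s).real {y} * (p.real {s} - p'.real {s})| := by
        refine Finset.sum_congr rfl fun y _ => ?_
        rw [key p hp, key p' hp', ← Finset.sum_sub_distrib]
        simp only [mul_sub]
    _ ≤ ∑ y, ∑ s ∈ S, (T s).real {y} * |p.real {s} - p'.real {s}| := by
        refine Finset.sum_le_sum fun y _ => (Finset.abs_sum_le_sum_abs _ _).trans_eq ?_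
        simp [abs_mul, abs_of_nonneg measureReal_nonneg]
    _ = l1Dist S p p' := by
        rw [Finset.sum_comm, l1Dist]
        refine Finset.sum_congr rfl fun s _ => ?_
        rw [← Finset.sum_mul, hsum, one_mul]

/-- The common part of two measures on `S`: the mass function is the pointwise minimum. -/
def commonPart (S : Finset α) (p p' : Measure α) : Measure α :=
  ∑ s ∈ S, min (p {s}) (p' {s}) • Measure.dirac s

lemma commonPart_comm (S : Finset α) (p p' : Measure α) :
    commonPart S p p' = commonPart S p' p := by
  simp only [commonPart, min_comm]

lemma commonPart_le [MeasurableSingletonClass α] (S : Finset α) (p p' : Measure α) : commonPart S p p' ≤ p := by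
  classical
  refine Measure.le_iff.2 fun A hA => ?_
  calc commonPart S p p' A
      = ∑ s ∈ S, min (p {s}) (p' {s}) * A.indicator 1 s := by
        simp [commonPart, Measure.finsetSum_apply, Measure.dirac_apply' _ hA]
    _ ≤ ∑ s ∈ S, if s ∈ A then p {s} else 0 := by
        refine Finset.sum_le_sum fun s _ => ?_
        by_cases h : s ∈ A <;> simp [h]
    _ = p ((S.filter (· ∈ A) : Finset α) : Set α) := by
        rw [← Finset.sum_filter, sum_measure_singleton]
    _ ≤ p A := measure_mono fun s hs => by simpa using (Finset.mem_filter.1 hs).2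

lemma measure_univ_le_commonPart_add [MeasurableSingletonClass α] (p p' : Measure α)
    [IsFiniteMeasure p] [IsFiniteMeasure p']
    {S : Finset α} (hp : p ((S : Set α)ᶜ) = 0) :
    p Set.univ ≤ commonPart S p p' Set.univ + ENNReal.ofReal (l1Dist S p p') := by
  have h1 : p Set.univ = ∑ s ∈ S, p {s} := by
    simpa using lintegral_eq_sum_of_finset hp 1
  have h2 : commonPart S p p' Set.univ = ∑ s ∈ S, min (p {s}) (p' {s}) := by
    simp [commonPart, Measure.finsetSum_apply]
  rw [h1, h2, l1Dist, ENNReal.ofReal_sum_of_nonneg (fun _ _ => abs_nonneg _),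
    ← Finset.sum_add_distrib]
  refine Finset.sum_le_sum fun s _ => ?_
  rcases le_total (p {s}) (p' {s}) with h | h
  · rw [min_eq_left h]; exact le_self_add
  · rw [min_eq_right h]; exact measure_singleton_le_add p p' s

end FiniteSupport

/-! ### Transport cost to the vertices of the simplex -/

section Transport

lemma measurable_l1Cost (k : ℕ) : Measurable fun z : (Fin k → ℝ) × Fin k => l1Cost k z.1 z.2 := by
  have : ∀ y : Fin k, Measurable fun s : Fin k → ℝ => l1Cost k s y := by
    intro y
    unfold l1Cost
    fun_prop
  exact measurable_from_prod_countable_left this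

/-- On the simplex, the `ℓ₁` distance to the vertex `e_y` is `2 (1 - s_y)`. -/
lemma l1Cost_eq {k : ℕ} {s : Fin k → ℝ} (h0 : ∀ i, 0 ≤ s i) (h1 : ∑ i, s i = 1) (y : Fin k) :
    l1Cost k s y = 2 * ENNReal.ofReal (1 - s y) := by
  have hle : s y ≤ 1 := h1 ▸ Finset.single_le_sum (fun i _ => h0 i) (Finset.mem_univ y)
  have : ∑ j, |s j - oneHot k y j| = 2 * (1 - s y) := by
    rw [← Finset.add_sum_erase _ _ (Finset.mem_univ y)] at h1 ⊢
    have : ∑ x ∈ Finset.univ.erase y, |s x - oneHot k y x| = ∑ x ∈ Finset.univ.erase y, s x := by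
      refine Finset.sum_congr rfl fun x hx => ?_
      simp [oneHot, Finset.ne_of_mem_erase hx, abs_of_nonneg (h0 x)]
    rw [this, oneHot, if_pos rfl, abs_of_nonpos (by linarith)]
    linarith
  rw [l1Cost, this, ENNReal.ofReal_mul (by norm_num)]
  simp

lemma l1Cost_le_two {k : ℕ} {s : Fin k → ℝ} (h0 : ∀ i, 0 ≤ s i) (h1 : ∑ i, s i = 1) (y : Fin k) :
    l1Cost k s y ≤ 2 := by
  rw [l1Cost_eq h0 h1]
  calc 2 * ENNReal.ofReal (1 - s y) ≤ 2 * ENNReal.ofReal 1 := by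
        gcongr; linarith [h0 y]
    _ = 2 := by simp

lemma inducedCoupling_eq {k : ℕ} (p : Measure (Fin k → ℝ)) [SFinite p]
    (T : Kernel (Fin k → ℝ) (Fin k)) [IsMarkovKernel T] :
    inducedCoupling p T = p ⊗ₘ T := by
  rw [Measure.compProd_eq_comp_prod, inducedCoupling]
  congr 1
  ext1 s
  rw [Kernel.prod_apply, Kernel.id_apply, Measure.dirac_prod]

/-- Stability of `W1` in its first argument.  From a coupling `γ` of `p` and `q`, keep the
part of `γ` lying over the common part of `p` and `p'`, and couple what is left of `p'` and `q`
independently; only the latter part costs extra, at most `2` per unit of mass. -/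
lemma W1_le_add_l1Dist {k : ℕ} {p p' : Measure (Fin k → ℝ)} [IsProbabilityMeasure p]
    [IsProbabilityMeasure p'] (q : Measure (Fin k)) [IsProbabilityMeasure q]
    {S : Finset (Fin k → ℝ)} (hS : ∀ s ∈ S, (∀ i, 0 ≤ s i) ∧ ∑ i, s i = 1)
    (hp' : p' ((S : Set (Fin k → ℝ))ᶜ) = 0) :
    W1 k p' q ≤ W1 k p q + 2 * ENNReal.ofReal (l1Dist S p' p) := by
  rw [W1, W1, ENNReal.iInf_add]
  refine le_iInf fun γ => ?_
  rw [ENNReal.iInf_add]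
  refine le_iInf fun hγ => ?_
  obtain ⟨hγ1, hγ2⟩ := hγ
  set ρ := commonPart S p' p with hρ
  have hρp' : ρ ≤ p' := commonPart_le S p' p
  have hρp : ρ ≤ p := by rw [hρ, commonPart_comm]; exact commonPart_le S p p'
  have : IsFiniteMeasure ρ := isFiniteMeasure_of_le p hρp
  set g := ρ.rnDeriv p
  have hgm : Measurable g := Measure.measurable_rnDeriv ρ p
  have hg1 : g ≤ᵐ[p] 1 := Measure.rnDeriv_le_one_of_le hρp
  have : ρ.HaveLebesgueDecomposition p := Measure.haveLebesgueDecomposition_of_sigmaFinite _ _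
  have hgρ : p.withDensity g = ρ :=
    Measure.withDensity_rnDeriv_eq ρ p (Measure.absolutelyContinuous_of_le hρp)
  set γ₁ := γ.withDensity (fun z => g z.1) with hγ₁
  have hγ₁le : γ₁ ≤ γ := by
    have : (fun z : (Fin k → ℝ) × Fin k => g z.1) ≤ᵐ[γ] 1 := by
      rw [← hγ1, Measure.fst] at hg1
      exact ae_of_ae_map measurable_fst.aemeasurable hg1
    calc γ₁ ≤ γ.withDensity 1 := withDensity_mono this
      _ = γ := withDensity_one
  have hγ₁fst : γ₁.fst = ρ := by
    ext A hA
    rw [← hgρ, Measure.fst_apply hA, withDensity_apply _ (measurable_fst hA),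
      withDensity_apply _ hA, ← hγ1, Measure.fst, setLIntegral_map hA hgm measurable_fst]
  have hγ₁snd : γ₁.snd ≤ q := by
    rw [← hγ2]
    exact Measure.map_mono hγ₁le measurable_snd
  have : IsFiniteMeasure γ₁.snd := isFiniteMeasure_of_le q hγ₁snd
  set p'' := p' - ρ with hp''
  set q'' := q - γ₁.snd with hq''
  have hpadd : p'' + ρ = p' := Measure.sub_add_cancel_of_le hρp'
  have hqadd : q'' + γ₁.snd = q := Measure.sub_add_cancel_of_le hγ₁snd
  have hmass : q'' Set.univ = p'' Set.univ := by
    rw [hp'', hq'', Measure.sub_apply .univ hρp', Measure.sub_apply .univ hγ₁snd,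
      measure_univ (μ := q), measure_univ (μ := p'), Measure.snd_univ, ← Measure.fst_univ, hγ₁fst]
  set t := p'' Set.univ with ht
  have htop : t ≠ ⊤ := measure_ne_top _ _
  have htle : t ≤ ENNReal.ofReal (l1Dist S p' p) := by
    rw [ht, hp'', Measure.sub_apply .univ hρp']
    exact tsub_le_iff_left.2 (measure_univ_le_commonPart_add p' p hp')
  set γ₂ := t⁻¹ • p''.prod q'' with hγ₂
  have hcancel : ∀ {β : Type} [MeasurableSpace β] (ν : Measure β), ν Set.univ = t →
      t⁻¹ • t • ν = ν := by
    intro β _ ν hν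
    by_cases h0 : t = 0
    · have : ν = 0 := Measure.measure_univ_eq_zero.1 (hν.trans h0)
      simp [this]
    · rw [smul_smul, ENNReal.inv_mul_cancel h0 htop, one_smul]
  have hγ₂fst : γ₂.fst = p'' := by
    rw [hγ₂, Measure.fst, Measure.map_smul, Measure.map_fst_prod, hmass]
    exact hcancel p'' rfl
  have hγ₂snd : γ₂.snd = q'' := by
    rw [hγ₂, Measure.snd, Measure.map_smul, Measure.map_snd_prod]
    exact hcancel q'' hmass
  have hcoup : IsCoupling (γ₁ + γ₂) p' q := by
    constructor
    · rw [Measure.fst_add, hγ₁fst, hγ₂fst, add_comm, hpadd]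
    · rw [Measure.snd_add, hγ₂snd, add_comm, hqadd]
  refine (iInf₂_le (γ₁ + γ₂) hcoup).trans ?_
  rw [lintegral_add_measure]
  refine add_le_add (lintegral_mono' hγ₁le le_rfl) ?_
  have hae : ∀ᵐ z ∂γ₂, l1Cost k z.1 z.2 ≤ 2 := by
    have hp''S : ∀ᵐ s ∂(γ₂.fst), s ∈ S := by
      rw [hγ₂fst, ae_iff]
      exact nonpos_iff_eq_zero.1 ((Measure.sub_le _).trans_eq hp')
    rw [Measure.fst] at hp''S
    filter_upwards [ae_of_ae_map measurable_fst.aemeasurable hp''S] with z hz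
    exact l1Cost_le_two (hS _ hz).1 (hS _ hz).2 z.2
  calc ∫⁻ z, l1Cost k z.1 z.2 ∂γ₂ ≤ ∫⁻ _, 2 ∂γ₂ := lintegral_mono_ae hae
    _ = 2 * t := by rw [lintegral_const, ← Measure.fst_univ, hγ₂fst]
    _ ≤ _ := by gcongr

end Transport

/-! ### Error of a post-processed calibrated predictor -/

section Error

/-- For a calibrated predictor, the error of a randomized post-processing is half its
transport cost under the law of the predictor. -/
lemma lintegral_error_eq {𝒳 : Type*} [MeasurableSpace 𝒳] {k : ℕ} {μ : Measure (𝒳 × Fin k)}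
    {g : 𝒳 → Fin k → ℝ} (hg : Measurable g)
    (hcal : ∀ (i : Fin k) (s : Fin k → ℝ),
      μ {p | g p.1 = s ∧ p.2 = i} = ENNReal.ofReal (s i) * μ {p | g p.1 = s})
    {S : Finset (Fin k → ℝ)} (hS : ∀ s ∈ S, (∀ i, 0 ≤ s i) ∧ ∑ i, s i = 1)
    (hr : (μ.fst.map g) ((S : Set (Fin k → ℝ))ᶜ) = 0)
    (T : Kernel (Fin k → ℝ) (Fin k)) [IsMarkovKernel T] :
    ∫⁻ p, T (g p.1) ({p.2}ᶜ) ∂μ =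
      (1 / 2) * ∫⁻ s, ∫⁻ y, l1Cost k s y ∂(T s) ∂(μ.fst.map g) := by
  have hG : Measurable fun p : 𝒳 × Fin k => (g p.1, p.2) := by fun_prop
  have hF : Measurable fun z : (Fin k → ℝ) × Fin k => T z.1 ({z.2}ᶜ) := by
    refine measurable_from_prod_countable_left fun i => ?_
    exact T.measurable_coe (measurableSet_singleton i).compl
  have hrs : ∀ s, (μ.fst.map g) {s} = μ {p | g p.1 = s} := by
    intro s
    rw [Measure.map_apply hg (measurableSet_singleton s),
      Measure.fst_apply (hg (measurableSet_singleton s))]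
    rfl
  have hν : (μ.map fun p => (g p.1, p.2))
      (((S ×ˢ Finset.univ : Finset ((Fin k → ℝ) × Fin k)) : Set ((Fin k → ℝ) × Fin k))ᶜ) = 0 := by
    rw [Measure.map_apply hG (Finset.measurableSet _).compl]
    rw [Measure.map_apply hg (Finset.measurableSet _).compl,
      Measure.fst_apply (hg (Finset.measurableSet _).compl)] at hr
    refine measure_mono_null (fun p hp => ?_) hr
    simpa using hp
  have hνs : ∀ s i, (μ.map fun p => (g p.1, p.2)) {(s, i)} =
      ENNReal.ofReal (s i) * (μ.fst.map g) {s} := by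
    intro s i
    rw [hrs, ← hcal, Measure.map_apply hG (measurableSet_singleton _)]
    congr 1
    ext p
    simp
  have hpt : ∀ s ∈ S, ∑ i, T s ({i}ᶜ) * ENNReal.ofReal (s i) =
      ∑ i, ENNReal.ofReal (1 - s i) * T s {i} := by
    intro s hs
    obtain ⟨h0, h1⟩ := hS s hs
    have hle : ∀ i, s i ≤ 1 := fun i =>
      h1 ▸ Finset.single_le_sum (fun i _ => h0 i) (Finset.mem_univ i)
    have ht : ∑ i, (T s).real {i} = 1 := by simp
    have ht1 : ∀ i, (T s).real {i} ≤ 1 := fun i => measureReal_le_one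
    have e1 : ∀ i, T s ({i}ᶜ) * ENNReal.ofReal (s i) =
        ENNReal.ofReal ((1 - (T s).real {i}) * s i) := by
      intro i
      rw [← ofReal_measureReal (μ := T s) (s := {i}ᶜ),
        probReal_compl_eq_one_sub (measurableSet_singleton i),
        ENNReal.ofReal_mul (by linarith [ht1 i])]
    have e2 : ∀ i, ENNReal.ofReal (1 - s i) * T s {i} =
        ENNReal.ofReal ((1 - s i) * (T s).real {i}) := by
      intro i
      rw [← ofReal_measureReal (μ := T s) (s := {i}), ENNReal.ofReal_mul (by linarith [hle i])]
    simp only [e1, e2]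
    rw [← ENNReal.ofReal_sum_of_nonneg, ← ENNReal.ofReal_sum_of_nonneg]
    · congr 1
      simp only [sub_mul, one_mul, Finset.sum_sub_distrib, h1, ht]
      simp only [mul_comm]
    · intro i _
      exact mul_nonneg (by linarith [hle i]) measureReal_nonneg
    · intro i _
      exact mul_nonneg (by linarith [ht1 i]) (h0 i)
  calc ∫⁻ p, T (g p.1) ({p.2}ᶜ) ∂μ
      = ∫⁻ z, T z.1 ({z.2}ᶜ) ∂(μ.map fun p => (g p.1, p.2)) := (lintegral_map hF hG).symm
    _ = ∑ s ∈ S, ∑ i, T s ({i}ᶜ) * (ENNReal.ofReal (s i) * (μ.fst.map g) {s}) := by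
        rw [lintegral_eq_sum_of_finset hν, Finset.sum_product]
        simp only [hνs]
    _ = ∑ s ∈ S, (1 / 2) * ((∫⁻ y, l1Cost k s y ∂(T s)) * (μ.fst.map g) {s}) := by
        refine Finset.sum_congr rfl fun s hs => ?_
        simp only [← mul_assoc]
        rw [← Finset.sum_mul, hpt s hs, lintegral_fintype]
        congr 1
        rw [Finset.mul_sum]
        refine Finset.sum_congr rfl fun i _ => ?_
        rw [l1Cost_eq (hS s hs).1 (hS s hs).2, ← mul_assoc, ← mul_assoc, one_div,
          ENNReal.inv_mul_cancel two_ne_zero ENNReal.ofNat_ne_top, one_mul]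
    _ = _ := by rw [lintegral_eq_sum_of_finset hr, Finset.mul_sum]

end Error

/-! ### Concentration of the empirical distributions -/

section Concentration

/-- Two-sided Hoeffding bound for the empirical frequency of `B` in `n` i.i.d. samples. -/
lemma hoeffding_freq {α : Type*} [MeasurableSpace α] (r : Measure α) [IsProbabilityMeasure r]
    {B : Set α} (hB : MeasurableSet B) {n : ℕ} (hn : 0 < n) {t : ℝ} (ht : 0 ≤ t) :
    (Measure.pi fun _ : Fin n => r)
        {ω | t < |(n : ℝ)⁻¹ * ∑ i, B.indicator (fun _ => (1 : ℝ)) (ω i) - r.real B|} ≤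
      ENNReal.ofReal (2 * Real.exp (-(2 * n * t ^ 2))) := by
  set P := Measure.pi fun _ : Fin n => r
  set φ : α → ℝ := B.indicator (fun _ => (1 : ℝ))
  have hn' : (0 : ℝ) < n := by exact_mod_cast hn
  have hφ : Measurable φ := measurable_const.indicator hB
  have hsub : ∀ i : Fin n,
      HasSubgaussianMGF (fun ω : Fin n → α => φ (ω i) - r.real B) (1 / 4) P := by
    intro i
    have hm : Measurable fun ω : Fin n → α => φ (ω i) := by fun_prop
    have hb : ∀ᵐ ω ∂P, φ (ω i) ∈ Set.Icc (0 : ℝ) 1 := by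
      refine ae_of_all _ fun ω => ?_
      by_cases h : ω i ∈ B <;> simp [φ, h]
    have hmean : ∫ ω, φ (ω i) ∂P = r.real B := by
      rw [integral_comp_eval (μ := fun _ : Fin n => r) (i := i) hφ.aestronglyMeasurable]
      exact integral_indicator_one hB
    have := hasSubgaussianMGF_of_mem_Icc hm.aemeasurable hb
    rw [hmean] at this
    convert this using 1
    ext
    norm_num
  have hind : iIndepFun (fun (i : Fin n) (ω : Fin n → α) => φ (ω i) - r.real B) P :=
    iIndepFun_pi (X := fun _ x => φ x - r.real B) fun i => (hφ.sub_const _).aemeasurable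
  have hind' : iIndepFun (fun (i : Fin n) (ω : Fin n → α) => -(φ (ω i) - r.real B)) P :=
    iIndepFun_pi (X := fun _ x => -(φ x - r.real B)) fun i => (hφ.sub_const _).neg.aemeasurable
  have hε : 0 ≤ n * t := by positivity
  have b1 := HasSubgaussianMGF.measure_sum_ge_le_of_iIndepFun hind
    (s := Finset.univ) (fun i _ => hsub i) hε
  have b2 := HasSubgaussianMGF.measure_sum_ge_le_of_iIndepFun hind'
    (s := Finset.univ) (fun i _ => (hsub i).neg) hε
  have hexp : -(n * t) ^ 2 / (2 * ((∑ _i : Fin n, (1 / 4 : ℝ≥0) : ℝ≥0) : ℝ)) =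
      -(2 * n * t ^ 2) := by
    simp
    field_simp
    norm_num
  rw [hexp] at b1 b2
  have hset : {ω : Fin n → α | t < |(n : ℝ)⁻¹ * ∑ i, φ (ω i) - r.real B|} ⊆
      {ω | n * t ≤ ∑ i, (φ (ω i) - r.real B)} ∪ {ω | n * t ≤ ∑ i, -(φ (ω i) - r.real B)} := by
    intro ω hω
    rw [Set.mem_ofPred_eq] at hω
    have hs : ∑ i, (φ (ω i) - r.real B) = n * ((n : ℝ)⁻¹ * ∑ i, φ (ω i) - r.real B) := by
      rw [mul_sub, ← mul_assoc, mul_inv_cancel₀ hn'.ne', Finset.sum_sub_distrib]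
      simp
    simp only [Set.mem_union, Set.mem_ofPred_eq, Finset.sum_neg_distrib, hs, ← mul_neg]
    rcases lt_abs.1 hω with h | h
    · exact Or.inl (by gcongr)
    · exact Or.inr (by gcongr)
  calc _ ≤ _ := measure_mono hset
    _ ≤ _ := measure_union_le _ _
    _ ≤ ENNReal.ofReal (Real.exp (-(2 * n * t ^ 2))) +
        ENNReal.ofReal (Real.exp (-(2 * n * t ^ 2))) := by
      gcongr
      · rw [← ofReal_measureReal]; exact ENNReal.ofReal_le_ofReal b1
      · rw [← ofReal_measureReal]; exact ENNReal.ofReal_le_ofReal b2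
    _ = _ := by rw [← ENNReal.ofReal_add (by positivity) (by positivity), ← two_mul]

lemma isProbabilityMeasure_empDist {k m n : ℕ} (hn : 0 < n) (ω : Fin m → Fin n → (Fin k → ℝ))
    (a : Fin m) : IsProbabilityMeasure (empDist ω a) := by
  constructor
  have : (n : ℝ≥0∞) ≠ 0 := by exact_mod_cast hn.ne'
  simp [empDist, Measure.finsetSum_apply, ENNReal.inv_mul_cancel this]

lemma empDist_real_singleton {k m n : ℕ} (ω : Fin m → Fin n → (Fin k → ℝ)) (a : Fin m)
    (s : Fin k → ℝ) :
    (empDist ω a).real {s} =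
      (n : ℝ)⁻¹ * ∑ i, ({s} : Set (Fin k → ℝ)).indicator (fun _ => (1 : ℝ)) (ω a i) := by
  rw [Measure.real, empDist, Measure.smul_apply, Measure.finsetSum_apply, smul_eq_mul,
    ENNReal.toReal_mul, ENNReal.toReal_sum (fun i _ => measure_ne_top _ _)]
  simp only [ENNReal.toReal_inv, ENNReal.toReal_natCast]
  congr 1
  refine Finset.sum_congr rfl fun i _ => ?_
  rw [Measure.dirac_apply' _ (measurableSet_singleton s)]
  by_cases h : ω a i = s <;> simp [h]

lemma empDist_compl_eq_zero {k m n : ℕ} {ω : Fin m → Fin n → (Fin k → ℝ)} {a : Fin m}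
    {S : Finset (Fin k → ℝ)} (h : ∀ i, ω a i ∈ S) :
    empDist ω a ((S : Set (Fin k → ℝ))ᶜ) = 0 := by
  simp [empDist, Measure.finsetSum_apply, h]

/-- With probability at least `1 - δ`, all samples lie in the supports and all empirical
atom frequencies are within `t a` of the true ones, by a union bound over groups and atoms. -/
lemma prob_empDist_close {k m n : ℕ} (hn : 0 < n) (r : Fin m → Measure (Fin k → ℝ))
    [∀ a, IsProbabilityMeasure (r a)] (S : Fin m → Finset (Fin k → ℝ))
    (hrS : ∀ a, ∀ᵐ s ∂(r a), s ∈ S a) {t : Fin m → ℝ} (ht0 : ∀ a, 0 ≤ t a)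
    {δ : ℝ} (hδ : 0 < δ)
    (ht : ∀ a, (S a).card * (2 * Real.exp (-(2 * n * t a ^ 2))) ≤ δ / m) :
    ENNReal.ofReal (1 - δ) ≤
      (Measure.pi fun a : Fin m => Measure.pi fun _ : Fin n => r a)
        {ω | (∀ a i, ω a i ∈ S a) ∧
          ∀ a, ∀ s ∈ S a, |(empDist ω a).real {s} - (r a).real {s}| ≤ t a} := by
  set P := Measure.pi fun a : Fin m => Measure.pi fun _ : Fin n => r a with hP
  set bad : (a : Fin m) → (Fin k → ℝ) → Set (Fin m → Fin n → (Fin k → ℝ)) := fun a s =>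
    {ω | t a < |(empDist ω a).real {s} - (r a).real {s}|} with hbad
  set out : Set (Fin m → Fin n → (Fin k → ℝ)) := {ω | ¬ ∀ a i, ω a i ∈ S a} with hout
  set G : Set (Fin m → Fin n → (Fin k → ℝ)) := {ω | (∀ a i, ω a i ∈ S a) ∧
          ∀ a, ∀ s ∈ S a, |(empDist ω a).real {s} - (r a).real {s}| ≤ t a} with hG
  have hcover : Set.univ ⊆ G ∪ (out ∪ ⋃ a, ⋃ s ∈ S a, bad a s) := by
    intro ω _
    by_cases h1 : ∀ a i, ω a i ∈ S a
    · by_cases h2 : ∀ a, ∀ s ∈ S a, |(empDist ω a).real {s} - (r a).real {s}| ≤ t a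
      · exact Or.inl ⟨h1, h2⟩
      · push Not at h2
        obtain ⟨a, s, hs, h⟩ := h2
        exact Or.inr (Or.inr (Set.mem_iUnion.2 ⟨a, Set.mem_iUnion₂.2 ⟨s, hs, h⟩⟩))
    · exact Or.inr (Or.inl h1)
  have hPbad : ∀ a s, P (bad a s) ≤ ENNReal.ofReal (2 * Real.exp (-(2 * n * t a ^ 2))) := by
    intro a s
    have hmp := measurePreserving_eval (fun a : Fin m => Measure.pi fun _ : Fin n => r a) a
    have := hoeffding_freq (r a) (measurableSet_singleton s) hn (ht0 a)
    rw [← hmp.map_eq] at this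
    refine le_trans ?_ ((Measure.le_map_apply hmp.measurable.aemeasurable _).trans this)
    refine measure_mono fun ω hω => ?_
    have hω' : t a < |(empDist ω a).real {s} - (r a).real {s}| := hω
    rw [empDist_real_singleton] at hω'
    exact hω'
  have hPout : P out = 0 := by
    change ∀ᵐ ω ∂P, ∀ a i, ω a i ∈ S a
    refine ae_all_iff.2 fun a => ae_all_iff.2 fun i => ?_
    have h1 : ∀ᵐ ω' ∂(Measure.pi fun _ : Fin n => r a), ω' i ∈ S a :=
      (Measure.quasiMeasurePreserving_eval (fun _ : Fin n => r a) i).ae (hrS a)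
    exact (Measure.quasiMeasurePreserving_eval
      (fun a : Fin m => Measure.pi fun _ : Fin n => r a) a).ae h1
  have hPbadall : P (out ∪ ⋃ a, ⋃ s ∈ S a, bad a s) ≤ ENNReal.ofReal δ := by
    calc P (out ∪ ⋃ a, ⋃ s ∈ S a, bad a s)
        ≤ P out + P (⋃ a, ⋃ s ∈ S a, bad a s) := measure_union_le _ _
      _ ≤ 0 + ∑ a, ∑ s ∈ S a, P (bad a s) := by
          rw [hPout]
          gcongr
          exact (measure_iUnion_fintype_le _ _).trans
            (Finset.sum_le_sum fun a _ => measure_biUnion_finset_le _ _)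
      _ ≤ ∑ a : Fin m, ENNReal.ofReal (δ / m) := by
          rw [zero_add]
          refine Finset.sum_le_sum fun a _ => ?_
          refine (Finset.sum_le_sum fun s _ => hPbad a s).trans ?_
          rw [Finset.sum_const, nsmul_eq_mul, ← ENNReal.ofReal_natCast,
            ← ENNReal.ofReal_mul (by positivity)]
          exact ENNReal.ofReal_le_ofReal (ht a)
      _ ≤ ENNReal.ofReal δ := by
          rw [Finset.sum_const, Finset.card_univ, Fintype.card_fin, nsmul_eq_mul,
            ← ENNReal.ofReal_natCast, ← ENNReal.ofReal_mul (by positivity)]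
          refine ENNReal.ofReal_le_ofReal ?_
          rcases Nat.eq_zero_or_pos m with h | h
          · simp [h, hδ.le]
          · have : (0 : ℝ) < m := by exact_mod_cast h
            exact (mul_div_cancel₀ δ this.ne').le
  have h1 : (1 : ℝ≥0∞) ≤ P G + ENNReal.ofReal δ := by
    calc (1 : ℝ≥0∞) = P Set.univ := (measure_univ (μ := P)).symm
      _ ≤ _ := measure_mono hcover
      _ ≤ _ := measure_union_le _ _
      _ ≤ _ := by gcongr
  rw [ENNReal.ofReal_sub _ hδ.le, ENNReal.ofReal_one]
  exact tsub_le_iff_right.2 h1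

end Concentration

/-! ### Consequences of closeness in `ℓ₁` -/

section Deterministic

variable {k m : ℕ} {r e : Fin m → Measure (Fin k → ℝ)}
  [∀ a, IsProbabilityMeasure (r a)] [∀ a, IsProbabilityMeasure (e a)]
  {S : Fin m → Finset (Fin k → ℝ)} {q₀ : Measure (Fin k)} {ε : Fin m → ℝ}

/-- If `e a` is `ε a`-close to `r a`, maps optimal for the barycenter problem of the `e a` are
near-optimal for that of the `r a`.  Both changes of measure, from `r` to `e` for the given maps
and from `e` to `r` for a competitor `q`, cost `2 ε a` in group `a`. -/
lemma sum_cost_le_barycenter_add (hS : ∀ a, ∀ s ∈ S a, (∀ i, 0 ≤ s i) ∧ ∑ i, s i = 1)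
    (hrS : ∀ a, r a ((S a : Set (Fin k → ℝ))ᶜ) = 0)
    (heS : ∀ a, e a ((S a : Set (Fin k → ℝ))ᶜ) = 0)
    (hd : ∀ a, l1Dist (S a) (e a) (r a) ≤ ε a)
    (hq₀ : ∑ a, W1 k (e a) q₀ =
      ⨅ (q : Measure (Fin k)) (_ : IsProbabilityMeasure q), ∑ a, W1 k (e a) q)
    (T : Fin m → Kernel (Fin k → ℝ) (Fin k)) [∀ a, IsMarkovKernel (T a)]
    (hTopt : ∀ a, ∫⁻ z, l1Cost k z.1 z.2 ∂(inducedCoupling (e a) (T a)) = W1 k (e a) q₀) :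
    ∑ a, ∫⁻ s, ∫⁻ y, l1Cost k s y ∂(T a s) ∂(r a) ≤
      (⨅ (q : Measure (Fin k)) (_ : IsProbabilityMeasure q), ∑ a, W1 k (r a) q) +
        ∑ a, 4 * ENNReal.ofReal (ε a) := by
  have hcost : ∀ a, ∫⁻ s, ∫⁻ y, l1Cost k s y ∂(T a s) ∂(e a) = W1 k (e a) q₀ := by
    intro a
    rw [← hTopt a, inducedCoupling_eq, Measure.lintegral_compProd (measurable_l1Cost k)]
  have hc2 : ∀ a, ∀ s ∈ S a, ∫⁻ y, l1Cost k s y ∂(T a s) ≤ 2 := by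
    intro a s hs
    calc ∫⁻ y, l1Cost k s y ∂(T a s) ≤ ∫⁻ _, 2 ∂(T a s) :=
          lintegral_mono fun y => l1Cost_le_two (hS a s hs).1 (hS a s hs).2 y
      _ = 2 := by simp
  rw [ENNReal.iInf_add]
  refine le_iInf fun q => ?_
  rw [ENNReal.iInf_add]
  refine le_iInf fun hq => ?_
  calc ∑ a, ∫⁻ s, ∫⁻ y, l1Cost k s y ∂(T a s) ∂(r a)
      ≤ ∑ a, (W1 k (e a) q₀ + 2 * ENNReal.ofReal (ε a)) := by
        refine Finset.sum_le_sum fun a _ => ?_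
        rw [← hcost a]
        refine (lintegral_le_add_l1Dist (hrS a) (heS a) (hc2 a)).trans ?_
        rw [l1Dist_comm]
        gcongr
        exact hd a
    _ = ∑ a, W1 k (e a) q₀ + ∑ a, 2 * ENNReal.ofReal (ε a) :=
        Finset.sum_add_distrib
    _ ≤ ∑ a, W1 k (e a) q + ∑ a, 2 * ENNReal.ofReal (ε a) := by
        gcongr ?_ + _
        rw [hq₀]
        exact iInf₂_le q hq
    _ ≤ ∑ a, (W1 k (r a) q + 2 * ENNReal.ofReal (ε a)) +
          ∑ a, 2 * ENNReal.ofReal (ε a) := by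
        gcongr with a _
        refine (W1_le_add_l1Dist (p := r a) q (hS a) (heS a)).trans ?_
        gcongr
        exact hd a
    _ = ∑ a, W1 k (r a) q + ∑ a, 4 * ENNReal.ofReal (ε a) := by
        rw [Finset.sum_add_distrib, add_assoc, ← Finset.sum_add_distrib]
        congr 1
        refine Finset.sum_congr rfl fun a _ => ?_
        rw [← add_mul]
        norm_num

/-- If the maps `T a` send every `e a` to the same target `q₀`, the output laws of any two
groups under `r` differ in total variation by at most `max ε`: compare both with `q₀`. -/
lemma dp_gap_le (hrS : ∀ a, r a ((S a : Set (Fin k → ℝ))ᶜ) = 0)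
    (heS : ∀ a, e a ((S a : Set (Fin k → ℝ))ᶜ) = 0)
    (hd : ∀ a, l1Dist (S a) (e a) (r a) ≤ ε a)
    (T : Fin m → Kernel (Fin k → ℝ) (Fin k)) [∀ a, IsMarkovKernel (T a)]
    (hTq : ∀ a, (inducedCoupling (e a) (T a)).snd = q₀) (a a' : Fin m) :
    (1 / 2 : ℝ) * ∑ y, |(((r a).bind (T a)) {y}).toReal - (((r a').bind (T a')) {y}).toReal| ≤
      ⨆ a'', ε a'' := by
  have hq : ∀ a, (e a).bind (T a) = q₀ := by
    intro a
    rw [← hTq a, inducedCoupling_eq, Measure.snd_compProd]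
  have hone : ∀ a, ∑ y, |(((r a).bind (T a)) {y}).toReal - (q₀ {y}).toReal| ≤ ε a := by
    intro a
    have := sum_abs_bind_sub_le (hrS a) (heS a) (T a)
    rw [hq a, l1Dist_comm] at this
    exact this.trans (hd a)
  have hsup : ∀ a, ε a ≤ ⨆ a'', ε a'' := fun a =>
    le_ciSup (Set.finite_range ε).bddAbove a
  have htri : ∑ y, |(((r a).bind (T a)) {y}).toReal - (((r a').bind (T a')) {y}).toReal| ≤
      ε a + ε a' := by
    refine le_trans ?_ (add_le_add (hone a) (hone a'))
    rw [← Finset.sum_add_distrib]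
    refine Finset.sum_le_sum fun y _ => ?_
    rw [abs_sub_comm (((r a').bind (T a')) {y}).toReal]
    exact abs_sub_le _ _ _
  linarith [hsup a, hsup a']

end Deterministic

/-- **Finite-sample generalization, finite case** (Theorem 4.1).  Let `f` be a
calibrated predictor whose group-conditional output distributions `r a` are finitely
supported on `Ra a`.  Draw `n` i.i.d. samples from each `r a` (independently across
groups), let `q̂` be a barycenter of the empirical distributions and `T ω a` randomized
maps whose induced couplings from the empirical distributions achieve
`W₁(r̂_a, q̂)` (i.e. maps agreeing with optimal transports on the empirical supports).
Then with probability at least `1 − δ`, the post-processed classifier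
`ĥ(x,a) = T ω a (f (x,a))` satisfies
`Σ_a Err_a(ĥ) ≤ Err*_f + Σ_a √(2|Ra|²/n · ln(2m|Ra|/δ))` and its demographic-parity gap
is at most `max_a √(|Ra|²/(2n) · ln(2m|Ra|/δ))`. -/
theorem finite_sample_generalization_finite_case
    {𝒳 : Type*} [MeasurableSpace 𝒳] (k m n : ℕ) (hn : 0 < n)
    (μ : Fin m → Measure (𝒳 × Fin k)) (hμ : ∀ a, IsProbabilityMeasure (μ a))
    (f : 𝒳 × Fin m → Fin k → ℝ) (hfmeas : Measurable f)
    (hfΔ : ∀ p, (∀ i, 0 ≤ f p i) ∧ ∑ i, f p i = 1)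
    (hcal : IsCalibrated k m μ f)
    (Ra : Fin m → Finset (Fin k → ℝ))
    (hRa : ∀ a : Fin m, (((μ a).fst).map (fun x => f (x, a))) (↑(Ra a) : Set (Fin k → ℝ)) = 1)
    (qhat : (Fin m → Fin n → (Fin k → ℝ)) → Measure (Fin k))
    (hqhat : ∀ ω, IsProbabilityMeasure (qhat ω) ∧
      (∑ a : Fin m, W1 k (empDist ω a) (qhat ω)) =
        ⨅ (q : Measure (Fin k)) (_ : IsProbabilityMeasure q),
          ∑ a : Fin m, W1 k (empDist ω a) q)
    (T : (Fin m → Fin n → (Fin k → ℝ)) → Fin m → Kernel (Fin k → ℝ) (Fin k))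
    (hT : ∀ ω a, IsMarkovKernel (T ω a))
    (hTopt : ∀ ω (a : Fin m),
      IsCoupling (inducedCoupling (empDist ω a) (T ω a)) (empDist ω a) (qhat ω) ∧
      (∫⁻ z, l1Cost k z.1 z.2 ∂(inducedCoupling (empDist ω a) (T ω a))) =
        W1 k (empDist ω a) (qhat ω))
    (δ : ℝ) (hδ : 0 < δ) (hδ1 : δ < 1) :
    ENNReal.ofReal (1 - δ) ≤
      (Measure.pi fun a : Fin m => Measure.pi fun _ : Fin n =>
          ((μ a).fst).map (fun x => f (x, a)))
        {ω |
          (∑ a : Fin m, ∫⁻ p, (T ω a) (f (p.1, a)) ({p.2}ᶜ) ∂(μ a)) ≤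
            ((1 / 2) * ⨅ (q : Measure (Fin k)) (_ : IsProbabilityMeasure q),
              ∑ a : Fin m, W1 k (((μ a).fst).map (fun x => f (x, a))) q) +
            ENNReal.ofReal (∑ a : Fin m,
              Real.sqrt (2 * ((Ra a).card : ℝ) ^ 2 / n *
                Real.log (2 * m * ((Ra a).card : ℝ) / δ))) ∧
          ∀ a a' : Fin m,
            (1 / 2 : ℝ) * ∑ y : Fin k,
                |((((μ a).fst).bind fun x => (T ω a) (f (x, a))) {y}).toReal -
                  ((((μ a').fst).bind fun x => (T ω a') (f (x, a'))) {y}).toReal| ≤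
              ⨆ a'' : Fin m,
                Real.sqrt (((Ra a'').card : ℝ) ^ 2 / (2 * n) *
                  Real.log (2 * m * ((Ra a'').card : ℝ) / δ))} := by
  classical
  set r : Fin m → Measure (Fin k → ℝ) := fun a => ((μ a).fst).map (fun x => f (x, a)) with hr
  have hfa : ∀ a, Measurable fun x => f (x, a) := fun a => by fun_prop
  have hrp : ∀ a, IsProbabilityMeasure (r a) := fun a =>
    Measure.isProbabilityMeasure_map (hfa a).aemeasurable
  -- `Ra a` may contain null points outside the simplex; they are discarded first.
  set S : Fin m → Finset (Fin k → ℝ) := fun a =>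
    (Ra a).filter fun s => (∀ i, 0 ≤ s i) ∧ ∑ i, s i = 1 with hSdef
  have hS : ∀ a, ∀ s ∈ S a, (∀ i, 0 ≤ s i) ∧ ∑ i, s i = 1 := fun a s hs =>
    (Finset.mem_filter.1 hs).2
  have hrae : ∀ a, ∀ᵐ s ∂(r a), s ∈ S a := by
    intro a
    have h1 : ∀ᵐ s ∂(r a), s ∈ (Ra a : Set (Fin k → ℝ)) :=
      (prob_compl_eq_zero_iff (Finset.measurableSet _)).2 (hRa a)
    have h2 : ∀ᵐ x ∂(μ a).fst, (fun x => f (x, a)) x ∈ S a := by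
      filter_upwards [ae_of_ae_map (hfa a).aemeasurable h1] with x hx
      exact Finset.mem_filter.2 ⟨hx, hfΔ (x, a)⟩
    exact (ae_map_iff (hfa a).aemeasurable (Finset.measurableSet (S a))).2 h2
  have hrS : ∀ a, r a ((S a : Set (Fin k → ℝ))ᶜ) = 0 := fun a => hrae a
  have hn' : (0 : ℝ) < n := by exact_mod_cast hn
  have hcard : ∀ a, (1 : ℝ) ≤ (Ra a).card := by
    intro a
    have : (Ra a).Nonempty := by
      rw [Finset.nonempty_iff_ne_empty]
      intro h0
      have := hRa a
      simp [h0] at this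
    exact_mod_cast this.card_pos
  have hSR : ∀ a, ((S a).card : ℝ) ≤ (Ra a).card := fun a => by
    exact_mod_cast Finset.card_filter_le _ _
  have hm : ∀ _ : Fin m, (1 : ℝ) ≤ m := fun a => by exact_mod_cast a.pos
  have harg : ∀ a, 1 ≤ 2 * m * ((Ra a).card : ℝ) / δ := by
    intro a
    rw [le_div_iff₀ hδ]
    nlinarith [hcard a, hm a, mul_le_mul (hm a) (hcard a) zero_le_one (by linarith [hm a])]
  set L : Fin m → ℝ := fun a => Real.log (2 * m * ((Ra a).card : ℝ) / δ) with hL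
  have hL0 : ∀ a, 0 ≤ L a := fun a => Real.log_nonneg (harg a)
  -- The deviation at which Hoeffding's bound for one atom equals `δ / (m |Ra a|)`.
  set t : Fin m → ℝ := fun a => √(L a / (2 * n)) with ht
  have ht0 : ∀ a, 0 ≤ t a := fun a => Real.sqrt_nonneg _
  have ht2 : ∀ a, 2 * Real.exp (-(2 * n * t a ^ 2)) = δ / (m * (Ra a).card) := by
    intro a
    have e : 2 * n * t a ^ 2 = L a := by
      rw [ht, Real.sq_sqrt (by have := hL0 a; positivity)]
      field_simp
    have := hcard a
    have := hm a
    rw [e, hL, Real.exp_neg, Real.exp_log (by linarith [harg a])]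
    field_simp
  set ε : Fin m → ℝ := fun a =>
    √(((Ra a).card : ℝ) ^ 2 / (2 * n) * L a) with hε
  have hεt : ∀ a, ε a = (Ra a).card * t a := by
    intro a
    rw [hε, ht]
    simp only
    rw [show ((Ra a).card : ℝ) ^ 2 / (2 * n) * L a = ((Ra a).card : ℝ) ^ 2 * (L a / (2 * n)) by
      ring, Real.sqrt_mul (by positivity), Real.sqrt_sq (by positivity)]
  have hε2 : ∀ a, √(2 * ((Ra a).card : ℝ) ^ 2 / n * L a) = 2 * ε a := by
    intro a
    rw [hε]
    simp only
    rw [show 2 * ((Ra a).card : ℝ) ^ 2 / n * L a =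
      2 ^ 2 * (((Ra a).card : ℝ) ^ 2 / (2 * n) * L a) by field_simp,
      Real.sqrt_mul (by positivity), Real.sqrt_sq (by positivity)]
  have hgood := prob_empDist_close hn r S hrae ht0 hδ (fun a => by
    rw [ht2]
    have := hcard a
    have := hm a
    calc ((S a).card : ℝ) * (δ / (m * (Ra a).card))
        ≤ (Ra a).card * (δ / (m * (Ra a).card)) :=
          mul_le_mul_of_nonneg_right (hSR a) (by positivity)
      _ = δ / m := by field_simp)
  refine hgood.trans (measure_mono ?_)
  rintro ω ⟨hωS, hdev⟩
  have hep : ∀ a, IsProbabilityMeasure (empDist ω a) := isProbabilityMeasure_empDist hn ω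
  have heS : ∀ a, empDist ω a ((S a : Set (Fin k → ℝ))ᶜ) = 0 := fun a =>
    empDist_compl_eq_zero (hωS a)
  have hd : ∀ a, l1Dist (S a) (empDist ω a) (r a) ≤ ε a := by
    intro a
    calc l1Dist (S a) (empDist ω a) (r a) ≤ ∑ s ∈ S a, t a := Finset.sum_le_sum (hdev a)
      _ = (S a).card * t a := by rw [Finset.sum_const, nsmul_eq_mul]
      _ ≤ (Ra a).card * t a := mul_le_mul_of_nonneg_right (hSR a) (ht0 a)
      _ = ε a := (hεt a).symm
  have hTm := hT ω
  refine ⟨?_, ?_⟩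
  · have hinf := sum_cost_le_barycenter_add hS hrS heS hd (hqhat ω).2 (T ω)
      (fun a => (hTopt ω a).2)
    have herr : ∀ a, ∫⁻ p, (T ω a) (f (p.1, a)) ({p.2}ᶜ) ∂(μ a) =
        (1 / 2) * ∫⁻ s, ∫⁻ y, l1Cost k s y ∂(T ω a s) ∂(r a) := fun a =>
      lintegral_error_eq (hfa a) (hcal a) (hS a) (hrS a) (T ω a)
    have hhalf : ∀ x : ℝ, (1 / 2 : ℝ≥0∞) * (4 * ENNReal.ofReal x) = ENNReal.ofReal (2 * x) := by
      intro x
      rw [ENNReal.ofReal_mul (by norm_num), ← mul_assoc, ENNReal.ofReal_ofNat, one_div,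
        show (4 : ℝ≥0∞) = 2 * 2 by norm_num, ← mul_assoc,
        ENNReal.inv_mul_cancel two_ne_zero ENNReal.ofNat_ne_top, one_mul]
    calc ∑ a, ∫⁻ p, (T ω a) (f (p.1, a)) ({p.2}ᶜ) ∂(μ a)
        = (1 / 2) * ∑ a, ∫⁻ s, ∫⁻ y, l1Cost k s y ∂(T ω a s) ∂(r a) := by
          rw [Finset.mul_sum]
          exact Finset.sum_congr rfl fun a _ => herr a
      _ ≤ (1 / 2) * ((⨅ (q : Measure (Fin k)) (_ : IsProbabilityMeasure q),
            ∑ a, W1 k (r a) q) + ∑ a, 4 * ENNReal.ofReal (ε a)) := by gcongr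
      _ = (1 / 2) * (⨅ (q : Measure (Fin k)) (_ : IsProbabilityMeasure q),
            ∑ a, W1 k (r a) q) + ENNReal.ofReal (∑ a, 2 * ε a) := by
          have hε0 : ∀ a ∈ Finset.univ, 0 ≤ 2 * ε a := fun a _ =>
            mul_nonneg zero_le_two (Real.sqrt_nonneg _)
          rw [mul_add, Finset.mul_sum, ENNReal.ofReal_sum_of_nonneg hε0]
          simp only [hhalf]
      _ = _ := by
          congr 2
          exact Finset.sum_congr rfl fun a _ => (hε2 a).symm
  · intro a a'
    have hbind : ∀ a, (((μ a).fst).bind fun x => (T ω a) (f (x, a))) = (r a).bind (T ω a) := by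
      intro a
      ext1 B hB
      have hTf : Measurable fun x => (T ω a) (f (x, a)) := (T ω a).measurable.comp (hfa a)
      rw [Measure.bind_apply hB hTf.aemeasurable,
        Measure.bind_apply hB (T ω a).aemeasurable,
        lintegral_map ((T ω a).measurable_coe hB) (hfa a)]
    rw [hbind a, hbind a']
    exact dp_gap_le hrS heS hd (T ω) (fun a => (hTopt ω a).1.2) a a'

end
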